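/- Let T ≥ 2, τ ∈ {1,…,T}, z ∈ {1,…,τ−1}, α ∈ [0,1]. Suppose the file F, local randomness R with H(R) = ρ, and shares M_1,…,M_T (each M_t a deterministic function of (F,R)) satisfy recoverability, (α,z)-privacy, and leakage symmetry. Then ρ ≥ (max(0, z − τα)/(τ−z))·H(F). -/

import Mathlib

/-! The bound follows from Shannon inequalities, with Han's inequality relating the entropies of
`τ` and of `z` shares.

Write `h S = H(M_S)`. Entropy is submodular, hence so is `h`, and removing elements one at a time
by Han's inequality `∑ i ∈ S, (h S - h (S \ {i})) ≤ h S` (`han_sum`) produces from a set `S` of `τ`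
servers a subset `A` of size `z` with `z * h S ≤ τ * h A` (`exists_subset_entropy_ge`).
Put `I = I(F; M_A) ≤ α H(F)`.

* Recoverability gives `h S = H(F, M_S) ≥ H(F, M_A) = H(F) + h A - I`.
* Since `M_A` is a function of `(F, R)`, `H(F) + h A - I = H(F, M_A) ≤ H(F, R) ≤ H(F) + H(R)`,
  i.e. `h A - I ≤ ρ`.

Thus `(τ - z) * h A ≥ z * (H(F) - I)` and
`(τ - z) * ρ ≥ (τ - z) * (h A - I) ≥ z * H(F) - τ * I ≥ (z - τ * α) * H(F)`. -/

open scoped BigOperators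
open Classical

noncomputable section

/-- Probability of an event `A` under the probability mass function `p` on a finite
sample space `Ω`. -/
def prb {Ω : Type} [Fintype Ω] (p : Ω → ℝ) (A : Set Ω) : ℝ :=
  ∑ ω, if ω ∈ A then p ω else 0

/-- Shannon entropy (in bits, base-2 logarithm) of a random variable `X` defined on a
finite sample space with probability mass function `p`, with the convention
`0 * log 0 = 0`. -/
def ent {Ω V : Type} [Fintype Ω] [Fintype V] (p : Ω → ℝ) (X : Ω → V) : ℝ :=
  -∑ v, prb p {ω | X ω = v} * Real.logb 2 (prb p {ω | X ω = v})

/-- Conditional Shannon entropy `H(X | Y) = H(X, Y) - H(Y)`. -/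
def condEnt {Ω V W : Type} [Fintype Ω] [Fintype V] [Fintype W]
    (p : Ω → ℝ) (X : Ω → V) (Y : Ω → W) : ℝ :=
  ent p (fun ω => (X ω, Y ω)) - ent p Y

/-- Mutual information `I(X ; Y) = H(X) + H(Y) - H(X, Y)`. -/
def mutInf {Ω V W : Type} [Fintype Ω] [Fintype V] [Fintype W]
    (p : Ω → ℝ) (X : Ω → V) (Y : Ω → W) : ℝ :=
  ent p X + ent p Y - ent p (fun ω => (X ω, Y ω))

/-- The tuple of shares `M_S = (M_t)_{t ∈ S}` viewed as a single random variable. -/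
def shares {Ω : Type} {T : ℕ} {χ : Fin T → Type} (M : ∀ t, Ω → χ t)
    (S : Finset (Fin T)) : Ω → (∀ t : S, χ t.1) :=
  fun ω t => M t.1 ω

/-! ### Probabilities -/

section Probability

variable {Ω V W U : Type} [Fintype Ω] [Fintype V] [Fintype W] [Fintype U]

lemma prb_nonneg {p : Ω → ℝ} (hp0 : ∀ ω, 0 ≤ p ω) (A : Set Ω) : 0 ≤ prb p A := by
  unfold prb
  refine Finset.sum_nonneg fun ω _ => ?_
  split_ifs
  exacts [hp0 ω, le_rfl]

lemma prb_mono {p : Ω → ℝ} (hp0 : ∀ ω, 0 ≤ p ω) {A B : Set Ω} (h : A ⊆ B) :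
    prb p A ≤ prb p B := by
  unfold prb
  refine Finset.sum_le_sum fun ω _ => ?_
  by_cases hA : ω ∈ A
  · simp [hA, h hA]
  · simp only [hA, if_false]
    split_ifs
    exacts [hp0 ω, le_rfl]

lemma le_prb {p : Ω → ℝ} (hp0 : ∀ ω, 0 ≤ p ω) {A : Set Ω} {ω : Ω} (h : ω ∈ A) :
    p ω ≤ prb p A := by
  unfold prb
  have := Finset.single_le_sum (f := fun ω => if ω ∈ A then p ω else 0)
    (fun ω _ => by split_ifs; exacts [hp0 ω, le_rfl]) (Finset.mem_univ ω)
  simpa [h] using this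

/-- The expectation of a function of `X`, computed through the law of `X`. -/
lemma sum_prb_mul (p : Ω → ℝ) (X : Ω → V) (φ : V → ℝ) :
    ∑ v, prb p {ω | X ω = v} * φ v = ∑ ω, p ω * φ (X ω) := by
  simp only [prb, Finset.sum_mul]
  rw [Finset.sum_comm]
  refine Finset.sum_congr rfl fun ω _ => ?_
  simp [ite_mul]

lemma sum_prb_fiber {W : Type} (p : Ω → ℝ) (X : Ω → V) (Z : Ω → W) (w : W) :
    ∑ v, prb p {ω | (X ω, Z ω) = (v, w)} = prb p {ω | Z ω = w} := by
  simp only [prb]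
  rw [Finset.sum_comm]
  refine Finset.sum_congr rfl fun ω _ => ?_
  by_cases h : Z ω = w <;> simp [h]

/-! ### Shannon inequalities -/

lemma ent_eq_sum (p : Ω → ℝ) (X : Ω → V) :
    ent p X = -∑ ω, p ω * Real.logb 2 (prb p {ω' | X ω' = X ω}) := by
  unfold ent
  rw [sum_prb_mul p X (fun v => Real.logb 2 (prb p {ω' | X ω' = v}))]

/-- Entropy decreases under coarsening: `Y` is a function of `X`, expressed through the fibres. -/
lemma ent_le_of_determines {p : Ω → ℝ} (hp0 : ∀ ω, 0 ≤ p ω) (X : Ω → V) (Y : Ω → W)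
    (h : ∀ ω ω', X ω = X ω' → Y ω = Y ω') : ent p Y ≤ ent p X := by
  rw [ent_eq_sum, ent_eq_sum, neg_le_neg_iff]
  refine Finset.sum_le_sum fun ω _ => ?_
  rcases (hp0 ω).eq_or_lt with h0 | h0
  · simp [← h0]
  · refine mul_le_mul_of_nonneg_left ?_ h0.le
    refine Real.logb_le_logb_of_le one_lt_two ?_ ?_
    · exact h0.trans_le (le_prb hp0 (by simp))
    · exact prb_mono hp0 fun ω' hω' => h _ _ hω'

lemma ent_congr {p : Ω → ℝ} (hp0 : ∀ ω, 0 ≤ p ω) (X : Ω → V) (Y : Ω → W)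
    (h : ∀ ω ω', X ω = X ω' ↔ Y ω = Y ω') : ent p X = ent p Y :=
  le_antisymm (ent_le_of_determines hp0 Y X fun _ _ => (h _ _).2)
    (ent_le_of_determines hp0 X Y fun _ _ => (h _ _).1)

lemma ent_of_const {p : Ω → ℝ} (hp1 : ∑ ω, p ω = 1) (X : Ω → V)
    (h : ∀ ω ω', X ω = X ω') : ent p X = 0 := by
  rw [ent_eq_sum]
  have : ∀ ω, prb p {ω' | X ω' = X ω} = 1 := fun ω => by
    unfold prb
    rw [← hp1]
    exact Finset.sum_congr rfl fun ω' _ => if_pos (h _ _)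
  simp [this]

lemma ent_nonneg {p : Ω → ℝ} (hp0 : ∀ ω, 0 ≤ p ω) (hp1 : ∑ ω, p ω = 1) (X : Ω → V) :
    0 ≤ ent p X := by
  rw [← ent_of_const hp1 (fun _ => ()) (fun _ _ => rfl)]
  exact ent_le_of_determines hp0 _ _ fun _ _ _ => rfl

/-- The total mass of `P(x, z) P(y, z) / P(z)` over the support of `(X, Y, Z)` is at most one. -/
lemma sum_ratio_le_one {p : Ω → ℝ} (hp0 : ∀ ω, 0 ≤ p ω) (hp1 : ∑ ω, p ω = 1)
    (X : Ω → V) (Y : Ω → W) (Z : Ω → U) :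
    ∑ ω, p ω * (prb p {ω' | (X ω', Z ω') = (X ω, Z ω)} * prb p {ω' | (Y ω', Z ω') = (Y ω, Z ω)} /
      (prb p {ω' | (X ω', Y ω', Z ω') = (X ω, Y ω, Z ω)} * prb p {ω' | Z ω' = Z ω})) ≤ 1 := by
  have key := sum_prb_mul p (fun ω => (X ω, Y ω, Z ω)) (fun v =>
    prb p {ω' | (X ω', Z ω') = (v.1, v.2.2)} * prb p {ω' | (Y ω', Z ω') = v.2} /
      (prb p {ω' | (X ω', Y ω', Z ω') = v} * prb p {ω' | Z ω' = v.2.2}))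
  rw [← key]
  calc _ ≤ ∑ v : V × W × U, prb p {ω' | (X ω', Z ω') = (v.1, v.2.2)} *
        prb p {ω' | (Y ω', Z ω') = v.2} / prb p {ω' | Z ω' = v.2.2} := by
        refine Finset.sum_le_sum fun v _ => ?_
        have h1 := prb_nonneg hp0 {ω' | (X ω', Z ω') = (v.1, v.2.2)}
        have h2 := prb_nonneg hp0 {ω' | (Y ω', Z ω') = v.2}
        have h3 := prb_nonneg hp0 {ω' | Z ω' = v.2.2}
        rcases (prb_nonneg hp0 {ω' | (X ω', Y ω', Z ω') = v}).eq_or_lt with h0 | h0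
        · rw [← h0, zero_mul]
          positivity
        · rw [← mul_div_assoc, mul_div_mul_left _ _ h0.ne']
    _ = ∑ u, (∑ x, prb p {ω' | (X ω', Z ω') = (x, u)}) *
        (∑ y, prb p {ω' | (Y ω', Z ω') = (y, u)}) / prb p {ω' | Z ω' = u} := by
        simp only [Fintype.sum_prod_type, Finset.sum_mul_sum, Finset.sum_div]
        exact (Finset.sum_congr rfl fun _ _ => Finset.sum_comm).trans Finset.sum_comm
    _ = ∑ u, prb p {ω' | Z ω' = u} * 1 := by
        refine Finset.sum_congr rfl fun u _ => ?_
        rw [sum_prb_fiber, sum_prb_fiber, mul_self_div_self, mul_one]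
    _ ≤ 1 := by
        rw [sum_prb_mul p Z (fun _ => 1)]
        simp [hp1]

/-- Nonnegativity of the conditional mutual information `I(X; Y | Z)`. -/
lemma ent_submodular {p : Ω → ℝ} (hp0 : ∀ ω, 0 ≤ p ω) (hp1 : ∑ ω, p ω = 1)
    (X : Ω → V) (Y : Ω → W) (Z : Ω → U) :
    ent p (fun ω => (X ω, Y ω, Z ω)) + ent p Z ≤
      ent p (fun ω => (X ω, Z ω)) + ent p (fun ω => (Y ω, Z ω)) := by
  have hratio := sum_ratio_le_one hp0 hp1 X Y Z
  simp only [ent_eq_sum]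
  set a := fun ω => prb p {ω' | (X ω', Z ω') = (X ω, Z ω)}
  set b := fun ω => prb p {ω' | (Y ω', Z ω') = (Y ω, Z ω)}
  set c := fun ω => prb p {ω' | (X ω', Y ω', Z ω') = (X ω, Y ω, Z ω)}
  set d := fun ω => prb p {ω' | Z ω' = Z ω}
  have hl2 : 0 < Real.log 2 := Real.log_pos one_lt_two
  -- The pointwise inequality is `log t ≤ t - 1` at `t = a b / (c d)`.
  have hpt : ∀ ω, p ω * (Real.logb 2 (a ω) + Real.logb 2 (b ω) - Real.logb 2 (c ω)
      - Real.logb 2 (d ω)) ≤ (p ω * (a ω * b ω / (c ω * d ω)) - p ω) / Real.log 2 := by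
    intro ω
    rcases (hp0 ω).eq_or_lt with h0 | h0
    · simp [← h0]
    have ha : 0 < a ω := h0.trans_le (le_prb hp0 (by simp))
    have hb : 0 < b ω := h0.trans_le (le_prb hp0 (by simp))
    have hc : 0 < c ω := h0.trans_le (le_prb hp0 (by simp))
    have hd : 0 < d ω := h0.trans_le (le_prb hp0 (by simp))
    have hlog := Real.log_le_sub_one_of_pos (x := a ω * b ω / (c ω * d ω)) (by positivity)
    rw [Real.log_div (by positivity) (by positivity), Real.log_mul ha.ne' hb.ne',
      Real.log_mul hc.ne' hd.ne'] at hlog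
    rw [le_div_iff₀ hl2]
    have := mul_le_mul_of_nonneg_left hlog h0.le
    simp only [Real.logb]
    field_simp
    field_simp at this
    linarith
  have hsum := Finset.sum_le_sum fun ω (_ : ω ∈ Finset.univ) => hpt ω
  rw [← Finset.sum_div, Finset.sum_sub_distrib, hp1] at hsum
  have hneg : (∑ ω, p ω * (a ω * b ω / (c ω * d ω)) - 1) / Real.log 2 ≤ 0 :=
    div_nonpos_of_nonpos_of_nonneg (by linarith) hl2.le
  simp only [mul_add, mul_sub, Finset.sum_add_distrib, Finset.sum_sub_distrib] at hsum
  linarith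

lemma ent_pair_le {p : Ω → ℝ} (hp0 : ∀ ω, 0 ≤ p ω) (hp1 : ∑ ω, p ω = 1)
    (X : Ω → V) (Y : Ω → W) : ent p (fun ω => (X ω, Y ω)) ≤ ent p X + ent p Y := by
  have h := ent_submodular hp0 hp1 X Y (fun _ => ())
  rw [ent_of_const hp1 (fun _ => ()) (fun _ _ => rfl)] at h
  rw [ent_congr hp0 (fun ω => (X ω, Y ω, ())) (fun ω => (X ω, Y ω)) (by simp),
    ent_congr hp0 (fun ω => (X ω, ())) X (by simp),
    ent_congr hp0 (fun ω => (Y ω, ())) Y (by simp)] at h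
  linarith

end Probability

/-! ### Entropies of share tuples -/

section Shares

variable {Ω : Type} [Fintype Ω] {T : ℕ} {χ : Fin T → Type} [∀ t, Fintype (χ t)]

lemma shares_eq_iff (M : ∀ t, Ω → χ t) (S : Finset (Fin T)) (ω ω' : Ω) :
    shares M S ω = shares M S ω' ↔ ∀ t ∈ S, M t ω = M t ω' := by
  simp [shares, funext_iff]

/-- Diminishing increments of the entropy of share tuples. -/
lemma shares_increment_le {p : Ω → ℝ} (hp0 : ∀ ω, 0 ≤ p ω) (hp1 : ∑ ω, p ω = 1)
    (M : ∀ t, Ω → χ t) {A S : Finset (Fin T)} {i : Fin T} (hi : i ∈ S) (hA : A ⊆ S.erase i) :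
    ent p (shares M S) - ent p (shares M (S.erase i)) ≤
      ent p (shares M (insert i A)) - ent p (shares M A) := by
  have h := ent_submodular hp0 hp1 (shares M (S.erase i)) (M i) (shares M A)
  have e1 := ent_congr hp0 (fun ω => (shares M (S.erase i) ω, M i ω, shares M A ω)) (shares M S)
    (fun ω ω' => by
      simp only [Prod.mk.injEq, shares_eq_iff]
      constructor
      · rintro ⟨h1, h2, -⟩ t ht
        by_cases hti : t = i
        · exact hti ▸ h2
        · exact h1 t (Finset.mem_erase.2 ⟨hti, ht⟩)
      · intro h
        exact ⟨fun t ht => h t (Finset.mem_of_mem_erase ht), h i hi,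
          fun t ht => h t (Finset.mem_of_mem_erase (hA ht))⟩)
  have e2 := ent_congr hp0 (fun ω => (shares M (S.erase i) ω, shares M A ω))
    (shares M (S.erase i)) (fun ω ω' => by
      simp only [Prod.mk.injEq, shares_eq_iff]
      exact ⟨fun h => h.1, fun h => ⟨h, fun t ht => h t (hA ht)⟩⟩)
  have e3 := ent_congr hp0 (fun ω => (M i ω, shares M A ω)) (shares M (insert i A))
    (fun ω ω' => by simp only [Prod.mk.injEq, shares_eq_iff, Finset.forall_mem_insert])
  linarith

/-- Han's inequality; the case `A = S` is the one of interest, general `A ⊆ S` serves the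
induction. -/
lemma han_sum {p : Ω → ℝ} (hp0 : ∀ ω, 0 ≤ p ω) (hp1 : ∑ ω, p ω = 1)
    (M : ∀ t, Ω → χ t) (S A : Finset (Fin T)) (hA : A ⊆ S) :
    ∑ i ∈ A, (ent p (shares M S) - ent p (shares M (S.erase i))) ≤ ent p (shares M A) := by
  induction A using Finset.induction_on with
  | empty => simpa using ent_nonneg hp0 hp1 _
  | insert i A hi ih =>
    rw [Finset.insert_subset_iff] at hA
    rw [Finset.sum_insert hi]
    have h := shares_increment_le hp0 hp1 M hA.1
      (A := A) (fun t ht => Finset.mem_erase.2 ⟨fun e => hi (e ▸ ht), hA.2 ht⟩)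
    linarith [ih hA.2]

/-- Some server can be removed without decreasing the entropy per share. -/
lemma exists_erase_entropy_ge {p : Ω → ℝ} (hp0 : ∀ ω, 0 ≤ p ω) (hp1 : ∑ ω, p ω = 1)
    (M : ∀ t, Ω → χ t) (S : Finset (Fin T)) (hS : S.Nonempty) :
    ∃ i ∈ S, ((S.card : ℝ) - 1) * ent p (shares M S) ≤
      S.card * ent p (shares M (S.erase i)) := by
  by_contra! hcon
  have hlt := Finset.sum_lt_sum_of_nonempty hS hcon
  have h := han_sum hp0 hp1 M S S subset_rfl
  simp only [Finset.sum_sub_distrib, Finset.sum_const, nsmul_eq_mul] at h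
  rw [← Finset.mul_sum, Finset.sum_const, nsmul_eq_mul] at hlt
  have hc : (0 : ℝ) < S.card := by exact_mod_cast hS.card_pos
  have := lt_of_mul_lt_mul_left hlt hc.le
  linarith

lemma exists_subset_entropy_ge {p : Ω → ℝ} (hp0 : ∀ ω, 0 ≤ p ω) (hp1 : ∑ ω, p ω = 1)
    (M : ∀ t, Ω → χ t) {z : ℕ} (hz : 1 ≤ z) (n : ℕ) (hn : z ≤ n) (S : Finset (Fin T))
    (hS : S.card = n) :
    ∃ A ⊆ S, A.card = z ∧ (z : ℝ) * ent p (shares M S) ≤ n * ent p (shares M A) := by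
  induction n, hn using Nat.le_induction generalizing S with
  | base => exact ⟨S, subset_rfl, hS, le_rfl⟩
  | succ n hn ih =>
    obtain ⟨i, hi, hle⟩ := exists_erase_entropy_ge hp0 hp1 M S (Finset.card_pos.1 (by omega))
    obtain ⟨A, hA, hAz, hAe⟩ := ih (S.erase i) (by rw [Finset.card_erase_of_mem hi]; omega)
    refine ⟨A, hA.trans (Finset.erase_subset _ _), hAz, ?_⟩
    rw [hS] at hle
    push_cast at hle ⊢
    have hn0 : (0 : ℝ) < n := by exact_mod_cast (by omega : 0 < n)
    refine le_of_mul_le_mul_left ?_ hn0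
    -- `n z h(S) ≤ z (n + 1) h(S \ i) ≤ (n + 1) n h(A)`
    have h1 := mul_le_mul_of_nonneg_left hle (Nat.cast_nonneg (α := ℝ) z)
    have h2 := mul_le_mul_of_nonneg_left hAe (by positivity : (0 : ℝ) ≤ n + 1)
    linarith

end Shares

/-- Under recoverability, `(α, z)`-privacy, and leakage symmetry, the
local randomness `R` at the encoder (independent of `F`, with every share a
deterministic function of `(F, R)`) satisfies
`ρ = H(R) ≥ (max(0, z - τ·α) / (τ - z)) · H(F)`. -/
theorem local_randomness_lower_bound_symmetric
    {Ω : Type} [Fintype Ω] (p : Ω → ℝ)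
    (hp0 : ∀ ω, 0 ≤ p ω) (hp1 : ∑ ω, p ω = 1)
    {T : ℕ} (hT : 2 ≤ T) {τ z : ℕ} (hτ1 : 1 ≤ τ) (hτT : τ ≤ T)
    (hz1 : 1 ≤ z) (hzτ : z < τ)
    {α : ℝ} (hα0 : 0 ≤ α) (hα1 : α ≤ 1)
    {𝔽 : Type} [Fintype 𝔽] (F : Ω → 𝔽) (hF : 0 < ent p F)
    {ℛ : Type} [Fintype ℛ] (R : Ω → ℛ) (ρ : ℝ) (hρ : ent p R = ρ)
    (hind : ∀ (f : 𝔽) (r : ℛ), prb p {ω | F ω = f ∧ R ω = r} =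
      prb p {ω | F ω = f} * prb p {ω | R ω = r})
    {χ : Fin T → Type} [∀ t, Fintype (χ t)] (M : ∀ t, Ω → χ t)
    (hdet : ∀ t : Fin T, ∃ g : 𝔽 → ℛ → χ t, ∀ ω, M t ω = g (F ω) (R ω))
    (hrec : ∀ S : Finset (Fin T), τ ≤ S.card → condEnt p F (shares M S) = 0)
    (hpriv : ∀ S : Finset (Fin T), S.Nonempty → S.card ≤ z →
      mutInf p F (shares M S) ≤ α * ent p F)
    (hsym : ∀ t : ℕ, 1 ≤ t → t ≤ T → ∃ C : ℝ, 0 ≤ C ∧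
      ∀ S : Finset (Fin T), S.card = t → mutInf p F (shares M S) = C * ent p F) :
    ρ ≥ (max 0 ((z : ℝ) - (τ : ℝ) * α) / ((τ : ℝ) - (z : ℝ))) * ent p F := by
  obtain ⟨S, hS⟩ : ∃ S : Finset (Fin T), S.card = τ := by
    obtain ⟨S, -, hS⟩ := Finset.exists_subset_card_eq
      (s := (Finset.univ : Finset (Fin T))) (n := τ) (by simpa using hτT)
    exact ⟨S, hS⟩
  obtain ⟨A, hAS, hAz, hA⟩ := exists_subset_entropy_ge hp0 hp1 M hz1 τ hzτ.le S hS
  have hpr := hpriv A (Finset.card_pos.1 (by omega)) hAz.le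
  have hr := hrec S hS.ge
  unfold condEnt at hr
  unfold mutInf at hpr
  have hmono : ent p (fun ω => (F ω, shares M A ω)) ≤ ent p (fun ω => (F ω, shares M S ω)) := by
    refine ent_le_of_determines hp0 _ _ fun ω ω' h => ?_
    simp only [Prod.mk.injEq, shares_eq_iff] at h ⊢
    exact ⟨h.1, fun t ht => h.2 t (hAS ht)⟩
  have hfun : ent p (fun ω => (F ω, shares M A ω)) ≤ ent p (fun ω => (F ω, R ω)) := by
    refine ent_le_of_determines hp0 _ _ fun ω ω' h => ?_
    simp only [Prod.mk.injEq, shares_eq_iff] at h ⊢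
    refine ⟨h.1, fun t _ => ?_⟩
    obtain ⟨g, hg⟩ := hdet t
    rw [hg, hg, h.1, h.2]
  have hsub := ent_pair_le hp0 hp1 F R
  have hρ0 := ent_nonneg hp0 hp1 R
  rw [hρ] at hsub hρ0
  have hz0 : (0 : ℝ) ≤ z := Nat.cast_nonneg z
  have hd : (0 : ℝ) < (τ : ℝ) - z := sub_pos.2 (by exact_mod_cast hzτ)
  rw [ge_iff_le, div_mul_eq_mul_div, div_le_iff₀ hd]
  rcases le_total ((z : ℝ) - τ * α) 0 with hneg | hpos
  · rw [max_eq_left hneg, zero_mul]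
    positivity
  rw [max_eq_right hpos]
  set H := ent p F
  set h := ent p (shares M A)
  set G := ent p (fun ω => (F ω, shares M A ω))
  -- `H + h - G` is the leakage `I(F; M_A)`
  have h1 : (z : ℝ) * G ≤ τ * h :=
    (mul_le_mul_of_nonneg_left (by linarith) hz0).trans hA
  have h2 : ((τ : ℝ) - z) * (G - H) ≤ ((τ : ℝ) - z) * ρ :=
    mul_le_mul_of_nonneg_left (by linarith) hd.le
  have h3 : (τ : ℝ) * (H + h - G) ≤ τ * (α * H) :=
    mul_le_mul_of_nonneg_left hpr (Nat.cast_nonneg τ)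
  nlinarith

end
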